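/- One-step recursion for the momentum gradient-tracking error (the key inequality in the proof of Theorem 1). Fix w, w' ∈ ℝ^d, m₀ ∈ ℝ^d and β ∈ (0,1]. On a probability space, let J₁,…,J_m be random 2×d matrices with E[J_i] = ∇g_i(w) and ‖J_i‖ ≤ C_g almost surely (operator norm), and let V₁,…,V_m be random vectors with V_i ∈ Ω almost surely (J_i and V_i may be dependent). Define ∇̃ = (1/m) Σ_{i=1}^m J_iᵀ ∇f(V_i) and M₁ = (1−β) m₀ + β ∇̃. Then E[‖M₁ − ∇F(w)‖²] ≤ (1−β)‖m₀ − ∇F(w')‖² + (2 L_F²/β)‖w − w'‖² + (5 β C_g² L_f²/m) Σ_{i=1}^m E[‖V_i − g_i(w)‖²] + 2 β² C_g² C_f². -/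

import Mathlib

open MeasureTheory

section Gradient

variable {E H : Type*} [NormedAddCommGroup E] [InnerProductSpace ℝ E] [CompleteSpace E]
  [NormedAddCommGroup H] [InnerProductSpace ℝ H] [CompleteSpace H]

/-- Chain rule for gradients. -/
lemma hasGradientAt_comp {f : H → ℝ} {g : E → H} {w : E}
    (hf : DifferentiableAt ℝ f (g w)) (hg : DifferentiableAt ℝ g w) :
    HasGradientAt (fun x => f (g x))
      (ContinuousLinearMap.adjoint (fderiv ℝ g w) (gradient f (g w))) w := by
  rw [hasGradientAt_iff_hasFDerivAt]
  refine (hf.hasGradientAt.hasFDerivAt.comp w hg.hasFDerivAt).congr_fderiv ?_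
  ext v
  simp [ContinuousLinearMap.adjoint_inner_left]

/-- Gradient of an average of compositions. -/
lemma gradient_average_comp {ι : Type*} [Fintype ι] {f : H → ℝ} {g : ι → E → H} {w : E} (c : ℝ)
    (hf : ∀ i, DifferentiableAt ℝ f (g i w)) (hg : ∀ i, DifferentiableAt ℝ (g i) w) :
    gradient (fun x => c * ∑ i, f (g i x)) w =
      c • ∑ i, ContinuousLinearMap.adjoint (fderiv ℝ (g i) w) (gradient f (g i w)) := by
  apply HasGradientAt.gradient
  rw [hasGradientAt_iff_hasFDerivAt]
  have h := (HasFDerivAt.fun_sum fun i (_ : i ∈ Finset.univ) =>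
    (hasGradientAt_comp (hf i) (hg i)).hasFDerivAt).const_mul c
  refine h.congr_fderiv ?_
  ext v
  simp

lemma norm_adjoint_apply_sub_le {S T : E →L[ℝ] H} {x y : H} {a b : ℝ}
    (hS : ‖S‖ ≤ a) (hy : ‖y‖ ≤ b) :
    ‖ContinuousLinearMap.adjoint S x - ContinuousLinearMap.adjoint T y‖ ≤
      a * ‖x - y‖ + ‖S - T‖ * b := by
  have h : ContinuousLinearMap.adjoint S x - ContinuousLinearMap.adjoint T y =
      ContinuousLinearMap.adjoint S (x - y) + ContinuousLinearMap.adjoint (S - T) y := by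
    simp
  rw [h]
  refine (norm_add_le _ _).trans (add_le_add ?_ ?_)
  · refine (ContinuousLinearMap.le_opNorm _ _).trans ?_
    rw [LinearIsometryEquiv.norm_map]
    gcongr
  · refine (ContinuousLinearMap.le_opNorm _ _).trans ?_
    rw [LinearIsometryEquiv.norm_map]
    gcongr

lemma norm_adjoint_apply_le {S : E →L[ℝ] H} {x : H} {a b : ℝ}
    (hS : ‖S‖ ≤ a) (hx : ‖x‖ ≤ b) :
    ‖ContinuousLinearMap.adjoint S x‖ ≤ a * b := by
  refine (ContinuousLinearMap.le_opNorm _ _).trans ?_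
  rw [LinearIsometryEquiv.norm_map]
  exact mul_le_mul hS hx (norm_nonneg _) ((norm_nonneg _).trans hS)

end Gradient

section Average

variable {E : Type*} [NormedAddCommGroup E] [NormedSpace ℝ E] {m : ℕ}

lemma norm_average_le (hm : 0 < m) {x : Fin m → E} {K : ℝ} (hx : ∀ i, ‖x i‖ ≤ K) :
    ‖(m : ℝ)⁻¹ • ∑ i, x i‖ ≤ K := by
  have hm' : (0 : ℝ) < m := by exact_mod_cast hm
  have h : ‖∑ i, x i‖ ≤ m * K := by
    simpa using norm_sum_le_of_le Finset.univ fun i _ => hx i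
  rw [norm_smul, Real.norm_of_nonneg (inv_nonneg.2 hm'.le), inv_mul_le_iff₀ hm']
  exact h

lemma norm_average_sq_le (hm : 0 < m) (x : Fin m → E) :
    ‖(m : ℝ)⁻¹ • ∑ i, x i‖ ^ 2 ≤ (m : ℝ)⁻¹ * ∑ i, ‖x i‖ ^ 2 := by
  have hm' : (0 : ℝ) < m := by exact_mod_cast hm
  have h1 : ‖∑ i, x i‖ ^ 2 ≤ m * ∑ i, ‖x i‖ ^ 2 := by
    refine (pow_le_pow_left₀ (norm_nonneg _) (norm_sum_le _ _) 2).trans ?_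
    simpa using sq_sum_le_card_mul_sum_sq (s := Finset.univ) (f := fun i => ‖x i‖)
  rw [norm_smul, Real.norm_of_nonneg (inv_nonneg.2 hm'.le), mul_pow]
  calc (m : ℝ)⁻¹ ^ 2 * ‖∑ i, x i‖ ^ 2 ≤ (m : ℝ)⁻¹ ^ 2 * (m * ∑ i, ‖x i‖ ^ 2) := by gcongr
    _ = (m : ℝ)⁻¹ * ∑ i, ‖x i‖ ^ 2 := by field_simp

end Average

lemma norm_add_sq_le_two_mul {E : Type*} [SeminormedAddCommGroup E] (x y : E) : ‖x + y‖ ^ 2 ≤ 2 * (‖x‖ ^ 2 + ‖y‖ ^ 2) := by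
  nlinarith [norm_add_le x y, norm_nonneg (x + y), sq_nonneg (‖x‖ - ‖y‖)]

section Momentum

variable {E : Type*} [NormedAddCommGroup E] [InnerProductSpace ℝ E]

lemma norm_convex_combination_add_sq_le {β : ℝ} (hβ : β ∈ Set.Ioc (0 : ℝ) 1) (a x : E) :
    ‖(1 - β) • a + x‖ ^ 2 ≤ (1 - β) * ‖a‖ ^ 2 + ‖x‖ ^ 2 / β := by
  obtain ⟨h0, h1⟩ := hβ
  have h : (1 - β) * ‖a‖ ^ 2 + ‖x‖ ^ 2 / β - ‖(1 - β) • a + x‖ ^ 2 =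
      (1 - β) * ‖β • a - x‖ ^ 2 / β := by
    simp only [norm_add_sq_real, norm_sub_sq_real, norm_smul, mul_pow, Real.norm_eq_abs, sq_abs,
      real_inner_smul_left]
    field_simp
    ring
  have : 0 ≤ (1 - β) * ‖β • a - x‖ ^ 2 / β := by
    have := sub_nonneg.2 h1
    positivity
  linarith

/-- Pointwise momentum error bound; the inner product is linear in the noise `S - p`. -/
lemma norm_momentum_error_sq_le {β : ℝ} (hβ : β ∈ Set.Ioc (0 : ℝ) 1) (a b U S p : E) :
    ‖(1 - β) • (a + b) + β • (U + (S - p))‖ ^ 2 ≤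
      (1 - β) * ‖a‖ ^ 2 + 2 / β * ‖b‖ ^ 2 + 3 * β * ‖U‖ ^ 2 + 2 * β ^ 2 * ‖S‖ ^ 2
        + inner ℝ ((2 * β * (1 - β)) • (a + b) - (4 * β ^ 2) • p) (S - p) := by
  obtain ⟨N, rfl⟩ : ∃ N, S = N + p := ⟨S - p, by simp⟩
  rw [add_sub_cancel_right]
  have h0 := hβ.1
  have h1 := hβ.2
  have hx : ‖(1 - β) • (a + b) + β • U‖ ^ 2 ≤
      (1 - β) * ‖a‖ ^ 2 + 2 / β * ‖b‖ ^ 2 + 2 * β * ‖U‖ ^ 2 := by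
    have e : (1 - β) • (a + b) + β • U = (1 - β) • a + ((1 - β) • b + β • U) := by module
    rw [e]
    refine (norm_convex_combination_add_sq_le hβ _ _).trans ?_
    have h2 := norm_add_sq_le_two_mul ((1 - β) • b) (β • U)
    simp only [norm_smul, mul_pow, Real.norm_eq_abs, sq_abs] at h2
    have h3 : (1 - β) ^ 2 * ‖b‖ ^ 2 ≤ ‖b‖ ^ 2 :=
      mul_le_of_le_one_left (sq_nonneg _) (by nlinarith)
    have h4 : ‖(1 - β) • b + β • U‖ ^ 2 / β ≤ 2 * (‖b‖ ^ 2 + β ^ 2 * ‖U‖ ^ 2) / β := by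
      gcongr
      linarith
    have h5 : 2 * (‖b‖ ^ 2 + β ^ 2 * ‖U‖ ^ 2) / β = 2 / β * ‖b‖ ^ 2 + 2 * β * ‖U‖ ^ 2 := by
      field_simp
    linarith
  have hUN : 2 * inner ℝ U N ≤ ‖U‖ ^ 2 + ‖N‖ ^ 2 := by
    have := sq_nonneg ‖U - N‖
    rw [norm_sub_sq_real] at this
    linarith
  have hUN' := mul_le_mul_of_nonneg_left hUN (sq_nonneg β)
  have hU : β ^ 2 * ‖U‖ ^ 2 ≤ β * ‖U‖ ^ 2 :=
    mul_le_mul_of_nonneg_right (by nlinarith) (sq_nonneg _)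
  have hp : 0 ≤ β ^ 2 * ‖p‖ ^ 2 := by positivity
  rw [smul_add β, ← add_assoc, norm_add_sq_real ((1 - β) • (a + b) + β • U), norm_smul β N,
    norm_add_sq_real N p]
  simp only [mul_pow, Real.norm_eq_abs, sq_abs, inner_add_left, inner_sub_left,
    real_inner_smul_left, real_inner_smul_right, real_inner_comm N p] at *
  nlinarith

end Momentum

lemma norm_sub_sq_le_of_mem_box {A B C : ℝ} {u v : EuclideanSpace ℝ (Fin 2)}
    (hu : 0 ≤ u 0 ∧ u 0 ≤ A ∧ C ≤ u 1 ∧ u 1 ≤ B) (hv : 0 ≤ v 0 ∧ v 0 ≤ A ∧ C ≤ v 1 ∧ v 1 ≤ B) :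
    ‖u - v‖ ^ 2 ≤ A ^ 2 + (B - C) ^ 2 := by
  obtain ⟨hu0, hu1, hu2, hu3⟩ := hu
  obtain ⟨hv0, hv1, hv2, hv3⟩ := hv
  simp only [EuclideanSpace.norm_sq_eq, Fin.sum_univ_two, PiLp.sub_apply, Real.norm_eq_abs, sq_abs]
  exact add_le_add (sq_le_sq' (by linarith) (by linarith)) (sq_le_sq' (by linarith) (by linarith))

/-- The noise in a combination of `Jᵢᵀ Gᵢ` with `E[Jᵢ] = Tᵢ` is centred, tested against `c`. -/
lemma integral_inner_average_adjoint_sub_eq_zero {E H Ω : Type*}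
    [NormedAddCommGroup E] [InnerProductSpace ℝ E] [CompleteSpace E]
    [NormedAddCommGroup H] [InnerProductSpace ℝ H] [CompleteSpace H]
    [MeasurableSpace Ω] {μ : Measure Ω} [IsProbabilityMeasure μ] {ι : Type*} [Fintype ι]
    {J : ι → Ω → E →L[ℝ] H} {T : ι → E →L[ℝ] H} (hJ : ∀ i, Integrable (J i) μ)
    (hT : ∀ i, ∫ ω, J i ω ∂μ = T i) (r : ℝ) (G : ι → H) (c : E) :
    Integrable (fun ω => inner ℝ c (r • ∑ i, ContinuousLinearMap.adjoint (J i ω) (G i)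
        - r • ∑ i, ContinuousLinearMap.adjoint (T i) (G i))) μ ∧
      ∫ ω, inner ℝ c (r • ∑ i, ContinuousLinearMap.adjoint (J i ω) (G i)
        - r • ∑ i, ContinuousLinearMap.adjoint (T i) (G i)) ∂μ = 0 := by
  have hi : ∀ i, Integrable (fun ω => inner ℝ (J i ω c) (G i)) μ := fun i =>
    ((hJ i).apply_continuousLinearMap c).inner_const (G i)
  have hs : Integrable (fun ω => r * ∑ i, inner ℝ (J i ω c) (G i)) μ :=
    (integrable_finsetSum _ fun i _ => hi i).const_mul r
  have hv : ∀ i, ∫ ω, inner ℝ (J i ω c) (G i) ∂μ = inner ℝ (T i c) (G i) := fun i => by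
    rw [← hT i, ContinuousLinearMap.integral_apply (hJ i), real_inner_comm,
      ← integral_inner ((hJ i).apply_continuousLinearMap c)]
    simp only [real_inner_comm]
  simp only [inner_sub_right, real_inner_smul_right, inner_sum,
    ContinuousLinearMap.adjoint_inner_right]
  refine ⟨hs.sub (integrable_const _), ?_⟩
  rw [integral_sub hs (integrable_const _), integral_const_mul,
    integral_finsetSum _ fun i _ => hi i]
  simp [hv]

/-- One-step recursion for the momentum gradient-tracking error
(the key inequality in the proof of Theorem 1). Here `L_F = C_g² L_f + C_f L_g`. -/
theorem momentum_tracking_error_recursion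
    (d m : ℕ) (hd : 0 < d) (hm : 0 < m)
    (C B₂ A : ℝ) (hC : 0 < C) (hCB : C ≤ B₂) (hA : 0 < A)
    (Ωset : Set (EuclideanSpace ℝ (Fin 2)))
    (hΩ : Ωset = {u : EuclideanSpace ℝ (Fin 2) | 0 ≤ u 0 ∧ u 0 ≤ A ∧ C ≤ u 1 ∧ u 1 ≤ B₂})
    (f : EuclideanSpace ℝ (Fin 2) → ℝ)
    (hf : ∀ u, f u = -(u 0) / (u 1))
    (Cf Lf Cg Lg : ℝ) (hCf : 0 < Cf) (hLf : 0 < Lf) (hCg : 0 < Cg) (hLg : 0 < Lg)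
    (hf_lip : ∀ u ∈ Ωset, ∀ v ∈ Ωset, |f u - f v| ≤ Cf * ‖u - v‖)
    (hf_grad_bdd : ∀ u ∈ Ωset, ‖gradient f u‖ ≤ Cf)
    (hf_grad_lip : ∀ u ∈ Ωset, ∀ v ∈ Ωset, ‖gradient f u - gradient f v‖ ≤ Lf * ‖u - v‖)
    (g : Fin m → EuclideanSpace ℝ (Fin d) → EuclideanSpace ℝ (Fin 2))
    (hg_diff : ∀ i, ContDiff ℝ 1 (g i))
    (hg_mem : ∀ i w, g i w ∈ Ωset)
    (hg_lip : ∀ i w w', ‖g i w - g i w'‖ ≤ Cg * ‖w - w'‖)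
    (hg_grad_lip : ∀ i w w', ‖fderiv ℝ (g i) w - fderiv ℝ (g i) w'‖ ≤ Lg * ‖w - w'‖)
    (F : EuclideanSpace ℝ (Fin d) → ℝ)
    (hF : ∀ w, F w = (m : ℝ)⁻¹ * ∑ i, f (g i w))
    (w w' m₀ : EuclideanSpace ℝ (Fin d))
    (β : ℝ) (hβ : β ∈ Set.Ioc (0 : ℝ) 1)
    (Ω₀ : Type*) [MeasurableSpace Ω₀] (μ : Measure Ω₀) [IsProbabilityMeasure μ]
    (J : Fin m → Ω₀ → (EuclideanSpace ℝ (Fin d) →L[ℝ] EuclideanSpace ℝ (Fin 2)))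
    (V : Fin m → Ω₀ → EuclideanSpace ℝ (Fin 2))
    (hJmeas : ∀ i, AEStronglyMeasurable (J i) μ)
    (hVmeas : ∀ i, AEStronglyMeasurable (V i) μ)
    (hJint : ∀ i, Integrable (J i) μ)
    (hJmean : ∀ i, ∫ ω, J i ω ∂μ = fderiv ℝ (g i) w)
    (hJbdd : ∀ i, ∀ᵐ ω ∂μ, ‖J i ω‖ ≤ Cg)
    (hVmem : ∀ i, ∀ᵐ ω ∂μ, V i ω ∈ Ωset) :
    ∫ ω, ‖((1 - β) • m₀
        + β • ((m : ℝ)⁻¹ • ∑ i, (ContinuousLinearMap.adjoint (J i ω)) (gradient f (V i ω))))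
        - gradient F w‖ ^ 2 ∂μ
      ≤ (1 - β) * ‖m₀ - gradient F w'‖ ^ 2
        + (2 * (Cg ^ 2 * Lf + Cf * Lg) ^ 2 / β) * ‖w - w'‖ ^ 2
        + (5 * β * Cg ^ 2 * Lf ^ 2 / m) * ∑ i, ∫ ω, ‖V i ω - g i w‖ ^ 2 ∂μ
        + 2 * β ^ 2 * Cg ^ 2 * Cf ^ 2 := by
  have hm' : (0 : ℝ) < m := by exact_mod_cast hm
  have hβ0 := hβ.1
  have hfd : ∀ u ∈ Ωset, DifferentiableAt ℝ f u := by
    intro u hu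
    rw [hΩ] at hu
    have hu1 : u 1 ≠ 0 := (hC.trans_le hu.2.2.1).ne'
    rw [funext hf]
    fun_prop (disch := assumption)
  have hgd : ∀ i x, DifferentiableAt ℝ (g i) x := fun i x =>
    (hg_diff i).differentiable one_ne_zero x
  have hgb : ∀ i x, ‖fderiv ℝ (g i) x‖ ≤ Cg := fun i x =>
    norm_fderiv_le_of_lip' ℝ hCg.le (Filter.Eventually.of_forall fun y => hg_lip i y x)
  have hgradF : ∀ x, gradient F x = (m : ℝ)⁻¹ • ∑ i,
      ContinuousLinearMap.adjoint (fderiv ℝ (g i) x) (gradient f (g i x)) := fun x => by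
    rw [funext hF]
    exact gradient_average_comp _ (fun i => hfd _ (hg_mem i x)) (fun i => hgd i x)
  have hb : ‖gradient F w' - gradient F w‖ ≤ (Cg ^ 2 * Lf + Cf * Lg) * ‖w - w'‖ := by
    rw [hgradF, hgradF, ← smul_sub, ← Finset.sum_sub_distrib]
    refine norm_average_le hm fun i => ?_
    refine (norm_adjoint_apply_sub_le (hgb i w') (hf_grad_bdd _ (hg_mem i w))).trans ?_
    have h1 := (hf_grad_lip _ (hg_mem i w') _ (hg_mem i w)).trans
      (mul_le_mul_of_nonneg_left (hg_lip i w' w) hLf.le)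
    have h2 := mul_le_mul_of_nonneg_left h1 hCg.le
    have h3 := mul_le_mul_of_nonneg_right (hg_grad_lip i w' w) hCf.le
    rw [norm_sub_rev w w']
    linarith
  have hb2 : ‖gradient F w' - gradient F w‖ ^ 2 ≤
      (Cg ^ 2 * Lf + Cf * Lg) ^ 2 * ‖w - w'‖ ^ 2 := by
    rw [← mul_pow]
    exact pow_le_pow_left₀ (norm_nonneg _) hb 2
  set a := m₀ - gradient F w'
  set b := gradient F w' - gradient F w
  set p := gradient F w with hp
  set c := (2 * β * (1 - β)) • (a + b) - (4 * β ^ 2) • p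
  obtain ⟨hNi, hN0⟩ := integral_inner_average_adjoint_sub_eq_zero hJint hJmean (m : ℝ)⁻¹
    (fun i => gradient f (g i w)) c
  rw [← hgradF w, ← hp] at hNi hN0
  have hVint : ∀ i, Integrable (fun ω => ‖V i ω - g i w‖ ^ 2) μ := fun i => by
    refine Integrable.of_bound (((hVmeas i).sub aestronglyMeasurable_const).norm.pow 2)
      (A ^ 2 + (B₂ - C) ^ 2) ?_
    filter_upwards [hVmem i] with ω hω
    rw [Real.norm_of_nonneg (sq_nonneg _)]
    have hgm := hg_mem i w
    rw [hΩ] at hω hgm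
    exact norm_sub_sq_le_of_mem_box hω hgm
  have hVs : Integrable (fun ω => ∑ i, ‖V i ω - g i w‖ ^ 2) μ :=
    integrable_finsetSum _ fun i _ => hVint i
  set K := (1 - β) * ‖a‖ ^ 2 + (2 * (Cg ^ 2 * Lf + Cf * Lg) ^ 2 / β) * ‖w - w'‖ ^ 2
    + 2 * β ^ 2 * Cg ^ 2 * Cf ^ 2 with hK
  have hRi : Integrable (fun ω => K
      + (5 * β * Cg ^ 2 * Lf ^ 2 / m) * ∑ i, ‖V i ω - g i w‖ ^ 2) μ :=
    (integrable_const _).add (hVs.const_mul _)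
  refine (integral_mono_of_nonneg (Filter.Eventually.of_forall fun ω => sq_nonneg _)
    (hRi.add hNi) ?_).trans ?_
  · filter_upwards [ae_all_iff.2 hJbdd, ae_all_iff.2 hVmem] with ω hJω hVω
    set S := (m : ℝ)⁻¹ • ∑ i, ContinuousLinearMap.adjoint (J i ω) (gradient f (g i w)) with hS
    set D := (m : ℝ)⁻¹ • ∑ i, ContinuousLinearMap.adjoint (J i ω) (gradient f (V i ω)) with hD
    have hSn : ‖S‖ ^ 2 ≤ (Cg * Cf) ^ 2 := pow_le_pow_left₀ (norm_nonneg _)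
      (norm_average_le hm fun i => norm_adjoint_apply_le (hJω i) (hf_grad_bdd _ (hg_mem i w))) 2
    have hUn : ‖D - S‖ ^ 2 ≤ (m : ℝ)⁻¹ * (Cg ^ 2 * Lf ^ 2 * ∑ i, ‖V i ω - g i w‖ ^ 2) := by
      rw [hD, hS, ← smul_sub, ← Finset.sum_sub_distrib]
      refine (norm_average_sq_le hm _).trans ?_
      rw [Finset.mul_sum _ _ (Cg ^ 2 * Lf ^ 2)]
      gcongr with i
      rw [← map_sub, ← mul_pow, ← mul_pow, mul_assoc]
      exact pow_le_pow_left₀ (norm_nonneg _)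
        (norm_adjoint_apply_le (hJω i) (hf_grad_lip _ (hVω i) _ (hg_mem i w))) 2
    have hsplit : (1 - β) • m₀ + β • D - p = (1 - β) • (a + b) + β • ((D - S) + (S - p)) := by
      simp only [a, b]
      module
    have hmain := norm_momentum_error_sq_le hβ a b (D - S) S p
    rw [← hsplit] at hmain
    refine hmain.trans ?_
    have h1 : 2 / β * ‖b‖ ^ 2 ≤ 2 * (Cg ^ 2 * Lf + Cf * Lg) ^ 2 / β * ‖w - w'‖ ^ 2 := by
      calc 2 / β * ‖b‖ ^ 2 ≤ 2 / β * ((Cg ^ 2 * Lf + Cf * Lg) ^ 2 * ‖w - w'‖ ^ 2) := by gcongr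
        _ = _ := by ring
    have h2 : 3 * β * ‖D - S‖ ^ 2 ≤
        5 * β * Cg ^ 2 * Lf ^ 2 / m * ∑ i, ‖V i ω - g i w‖ ^ 2 := by
      calc 3 * β * ‖D - S‖ ^ 2
          ≤ 5 * β * ((m : ℝ)⁻¹ * (Cg ^ 2 * Lf ^ 2 * ∑ i, ‖V i ω - g i w‖ ^ 2)) := by
            gcongr
            norm_num
        _ = _ := by ring
    have h3 : 2 * β ^ 2 * ‖S‖ ^ 2 ≤ 2 * β ^ 2 * Cg ^ 2 * Cf ^ 2 := by
      calc 2 * β ^ 2 * ‖S‖ ^ 2 ≤ 2 * β ^ 2 * (Cg * Cf) ^ 2 := by gcongr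
        _ = _ := by ring
    simp only [Pi.add_apply]
    linarith
  · have e : ∫ ω, (K + (5 * β * Cg ^ 2 * Lf ^ 2 / m) * ∑ i, ‖V i ω - g i w‖ ^ 2) ∂μ =
        K + (5 * β * Cg ^ 2 * Lf ^ 2 / m) * ∑ i, ∫ ω, ‖V i ω - g i w‖ ^ 2 ∂μ := by
      rw [integral_add (integrable_const _) (hVs.const_mul _), integral_const_mul,
        integral_finsetSum _ fun i _ => hVint i]
      simp
    rw [integral_add' hRi hNi, hN0, e, hK]
    linarith
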